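/- arXiv:2510.23991 — 2 statements merged into one kernel-verified Lean document; each statement's English description precedes it below -/
import Mathlib

section
/- For subspaces R ⊆ L_i sampled as follows — R ∈ Grass(n, 2(1−δ)ℓ) uniform, and L_1,…,L_k ∈ Grass(n,2ℓ) uniform and independent conditioned on L_i ⊇ R — the probability that L_i ∩ L_j = R for all i ≠ j is at least 1 − k^2 · 2^{4ℓ − n} (in particular at least 1/2 when n ≥ 4ℓ + 2 log k + 1). -/
/-!
Fix `R` and a subspace `L ⊇ R`, and pass to the quotient `V ⧸ R`, where the images of `L` and of a
random `M ⊇ R` meet nontrivially exactly when `L ⊓ M ≠ R`. The linear group is transitive on nonzero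
vectors, so a nonzero vector lies in a random subspace with probability at most the density of that
subspace. Summing over the vectors of the image of `L` bounds the probability of `L ⊓ M ≠ R`, and a
union bound over pairs of indices concludes.
-/

open Module

section UniformProb

variable {α β : Type*}

/-- The probability that a uniformly random element of the finite type `α` satisfies `p`, with value
`0` if `α` is empty. It is `Finset.dens` without `Fintype` and decidability data. -/
noncomputable def uniformProb (p : α → Prop) : ℚ :=
  Nat.card {a // p a} / Nat.card α

lemma uniformProb_false : uniformProb (fun _ : α ↦ False) = 0 := by
  simp [uniformProb]

lemma uniformProb_mul_natCard [Finite α] (p : α → Prop) :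
    uniformProb p * Nat.card α = Nat.card {a // p a} := by
  cases isEmpty_or_nonempty α
  · simp
  · exact div_mul_cancel₀ _ (by exact_mod_cast Nat.card_pos.ne')

lemma uniformProb_le_iff [Finite α] {p : α → Prop} {c : ℚ} (hc : 0 ≤ c) :
    uniformProb p ≤ c ↔ (Nat.card {a // p a} : ℚ) ≤ c * Nat.card α := by
  rw [← uniformProb_mul_natCard]
  cases isEmpty_or_nonempty α
  · simp [uniformProb, hc]
  · exact (mul_le_mul_iff_left₀ (by exact_mod_cast Nat.card_pos)).symm

lemma uniformProb_le_of_imp [Finite α] {p q : α → Prop} (h : ∀ a, p a → q a) :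
    uniformProb p ≤ uniformProb q := by
  unfold uniformProb
  gcongr
  exact Nat.card_le_card_of_injective _ (Subtype.map_injective h Function.injective_id)

lemma uniformProb_comp_equiv (e : α ≃ β) (p : β → Prop) :
    uniformProb (fun a ↦ p (e a)) = uniformProb p := by
  rw [uniformProb, uniformProb, Nat.card_congr e,
    Nat.card_congr (e.subtypeEquiv fun _ ↦ Iff.rfl : {a // p (e a)} ≃ {b // p b})]

lemma uniformProb_not [Finite α] [Nonempty α] (p : α → Prop) :
    uniformProb (fun a ↦ ¬p a) = 1 - uniformProb p := by
  classical
  have hcard : Nat.card {a // p a} + Nat.card {a // ¬p a} = Nat.card α := by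
    rw [← Nat.card_sum, Nat.card_congr (Equiv.sumCompl p)]
  have hα : (Nat.card α : ℚ) ≠ 0 := by exact_mod_cast Nat.card_pos.ne'
  rw [uniformProb, uniformProb, eq_sub_iff_add_eq, ← add_div, div_eq_one_iff_eq hα, add_comm]
  exact_mod_cast hcard

lemma uniformProb_subtype (p q : α → Prop) :
    uniformProb (fun a : {a // p a} ↦ q a) =
      (Nat.card {a // p a ∧ q a} : ℚ) / Nat.card {a // p a} := by
  rw [uniformProb, Nat.card_congr (Equiv.subtypeSubtypeEquivSubtypeInter p q)]

lemma uniformProb_exists_le_sum {ι : Type*} [Fintype ι] [Finite α] (p : ι → α → Prop) :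
    uniformProb (fun a ↦ ∃ i, p i a) ≤ ∑ i, uniformProb (p i) := by
  have hcard : Nat.card {a // ∃ i, p i a} ≤ ∑ i, Nat.card {a // p i a} := by
    rw [← Nat.card_sigma]
    exact Nat.card_le_card_of_surjective (fun x : Σ i, {a // p i a} ↦ ⟨x.2, x.1, x.2.2⟩)
      fun ⟨a, i, ha⟩ ↦ ⟨⟨i, a, ha⟩, rfl⟩
  simp only [uniformProb, ← Finset.sum_div]
  gcongr
  exact_mod_cast hcard

lemma uniformProb_exists_le_card_mul {ι : Type*} [Finite ι] [Finite α] {p : ι → α → Prop} {c : ℚ}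
    (h : ∀ i, uniformProb (p i) ≤ c) : uniformProb (fun a ↦ ∃ i, p i a) ≤ Nat.card ι * c := by
  have := Fintype.ofFinite ι
  rw [Nat.card_eq_fintype_card, ← nsmul_eq_mul]
  exact (uniformProb_exists_le_sum p).trans (Finset.sum_le_card_nsmul _ _ _ fun i _ ↦ h i)

lemma uniformProb_sigma_le {γ : α → Type*} [Finite α] [∀ a, Finite (γ a)]
    {p : (Σ a, γ a) → Prop} {c : ℚ} (hc : 0 ≤ c) (h : ∀ a, uniformProb (fun b ↦ p ⟨a, b⟩) ≤ c) :
    uniformProb p ≤ c := by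
  have := Fintype.ofFinite α
  let fibers : {x // p x} ≃ Σ a, {b // p ⟨a, b⟩} :=
    { toFun x := ⟨x.1.1, x.1.2, x.2⟩
      invFun x := ⟨⟨x.1, x.2.1⟩, x.2.2⟩ }
  rw [uniformProb_le_iff hc, Nat.card_congr fibers, Nat.card_sigma, Nat.card_sigma, Nat.cast_sum,
    Nat.cast_sum, Finset.mul_sum]
  exact Finset.sum_le_sum fun a _ ↦ (uniformProb_le_iff hc).1 (h a)

lemma uniformProb_pi_pair_le {ι : Type*} [Finite ι] [Finite α] {i j : ι} (hij : i ≠ j)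
    {p : α → α → Prop} {c : ℚ} (hc : 0 ≤ c) (h : ∀ a, uniformProb (p a) ≤ c) :
    uniformProb (fun f : ι → α ↦ p (f i) (f j)) ≤ c := by
  classical
  let split : (ι → α) ≃ Σ _ : {x // x ≠ j} → α, α :=
    ((Equiv.funSplitAt j α).trans (Equiv.prodComm _ _)).trans (Equiv.sigmaEquivProd _ _).symm
  calc uniformProb (fun f : ι → α ↦ p (f i) (f j))
      = uniformProb (fun x : Σ _ : {x // x ≠ j} → α, α ↦ p (x.1 ⟨i, hij⟩) x.2) :=
        uniformProb_comp_equiv split fun x ↦ p (x.1 ⟨i, hij⟩) x.2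
    _ ≤ c := uniformProb_sigma_le hc fun g ↦ h (g ⟨i, hij⟩)

end UniformProb

section Submodule

variable {K V : Type*} [DivisionRing K] [AddCommGroup V] [Module K V]

lemma exists_linearEquiv_apply_eq {v w : V} (hv : v ≠ 0) (hw : w ≠ 0) :
    ∃ e : V ≃ₗ[K] V, e v = w := by
  let toSpan (u : V) (hu : u ≠ 0) := LinearEquiv.toSpanNonzeroSingleton K V u hu
  obtain ⟨e, he⟩ :=
    Submodule.exists_linearEquiv_restrict_eq ((toSpan v hv).symm ≪≫ₗ toSpan w hw)
  refine ⟨e, ?_⟩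
  have htoSpan (u : V) (hu : u ≠ 0) : (toSpan u hu 1 : V) = u := one_smul K u
  calc e v = e (toSpan v hv 1) := by rw [htoSpan]
    _ = toSpan w hw ((toSpan v hv).symm (toSpan v hv 1)) := (he _).symm
    _ = w := by rw [LinearEquiv.symm_apply_apply, htoSpan]

lemma exists_submodule_finrank_eq {d : ℕ} (hd : d ≤ finrank K V) :
    ∃ L : Submodule K V, finrank K L = d := by
  obtain ⟨b, hb⟩ := exists_linearIndependent_of_le_finrank hd
  exact ⟨Submodule.span K (Set.range b), by simpa using finrank_span_eq_card hb⟩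

lemma exists_submodule_le_finrank_eq (L : Submodule K V) {r : ℕ} (hr : r ≤ finrank K L) :
    ∃ R ≤ L, finrank K R = r := by
  obtain ⟨R, hR⟩ := exists_submodule_finrank_eq hr
  exact ⟨R.map L.subtype, Submodule.map_subtype_le L R,
    (Submodule.finrank_map_subtype_eq L R).trans hR⟩

lemma finrank_comap_mkQ [FiniteDimensional K V] (R : Submodule K V) (S : Submodule K (V ⧸ R)) :
    finrank K (S.comap R.mkQ) = finrank K R + finrank K S := by
  have hker : LinearMap.ker (R.mkQ.submoduleComap S) = R.comap (S.comap R.mkQ).subtype := by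
    ext x
    simp [LinearMap.submoduleComap, ← Subtype.val_inj]
  have hrange : LinearMap.range (R.mkQ.submoduleComap S) = ⊤ :=
    LinearMap.range_eq_top.2
      (R.mkQ.submoduleComap_surjective_of_surjective S R.mkQ_surjective)
  have hR : R ≤ S.comap R.mkQ := by simpa using LinearMap.ker_le_comap R.mkQ
  rw [← LinearMap.finrank_range_add_finrank_ker (R.mkQ.submoduleComap S), hker, hrange, finrank_top,
    (Submodule.comapSubtypeEquivOfLe hR).finrank_eq, add_comm]

lemma comap_mkQ_inf_comap_mkQ_eq_iff (R : Submodule K V) (S T : Submodule K (V ⧸ R)) :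
    S.comap R.mkQ ⊓ T.comap R.mkQ = R ↔ Disjoint S T := by
  rw [disjoint_iff, ← Submodule.comap_inf]
  conv_lhs => rhs; rw [← R.ker_mkQ, LinearMap.ker]
  exact (Submodule.comap_injective_of_surjective R.mkQ_surjective).eq_iff

end Submodule

section Grass

variable {K V : Type*} [Field K] [AddCommGroup V] [Module K V] {d r : ℕ}

variable (K V) in
/-- The Grassmannian of `d`-dimensional subspaces of `V`. -/
abbrev Grass (d : ℕ) : Type _ :=
  {L : Submodule K V // finrank K L = d}

/-- The `d`-dimensional subspaces of `V` containing `R`. -/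
abbrev GrassAbove (R : Submodule K V) (d : ℕ) : Type _ :=
  {L : Submodule K V // finrank K L = d ∧ R ≤ L}

/-- The correspondence theorem in fixed dimension, sending a subspace of `V ⧸ R` to its preimage.
The dimensions are related by addition because truncated subtraction would break the bijection. -/
noncomputable def grassQuotientEquiv [FiniteDimensional K V] (R : Submodule K V) (e : ℕ) :
    Grass K (V ⧸ R) e ≃ GrassAbove R (finrank K R + e) :=
  ((Submodule.comapMkQRelIso R).toEquiv.subtypeEquiv fun S ↦ by
    change _ ↔ finrank K (S.comap R.mkQ) = _
    rw [finrank_comap_mkQ, Nat.add_left_cancel_iff]).trans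
  ((Equiv.subtypeSubtypeEquivSubtypeInter (R ≤ ·) (finrank K · = finrank K R + e)).trans
    (Equiv.subtypeEquivRight fun _ ↦ and_comm))

lemma coe_grassQuotientEquiv [FiniteDimensional K V] (R : Submodule K V) {e : ℕ}
    (S : Grass K (V ⧸ R) e) : (grassQuotientEquiv R e S : Submodule K V) = S.1.comap R.mkQ :=
  rfl

lemma uniformProb_mem_le_uniformProb_mem [Finite V] {v : V} (hv : v ≠ 0) (w : V) :
    uniformProb (fun L : Grass K V d ↦ v ∈ L.1) ≤ uniformProb (fun L : Grass K V d ↦ w ∈ L.1) := by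
  obtain rfl | hw := eq_or_ne w 0
  · exact uniformProb_le_of_imp fun L _ ↦ L.1.zero_mem
  obtain ⟨e, rfl⟩ := exists_linearEquiv_apply_eq (K := K) hv hw
  let mapEquiv : Grass K V d ≃ Grass K V d :=
    (Submodule.orderIsoMapComap e).toEquiv.subtypeEquiv fun L ↦ by
      change _ ↔ finrank K (L.map (e : V →ₗ[K] V)) = d
      rw [LinearEquiv.finrank_map_eq]
  rw [← uniformProb_comp_equiv mapEquiv fun L ↦ e v ∈ L.1]
  exact uniformProb_le_of_imp fun L hL ↦ Submodule.mem_map_of_mem hL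

lemma sum_natCard_grass_mem [Fintype V] :
    ∑ v : V, Nat.card {L : Grass K V d // v ∈ L.1} = Nat.card (Grass K V d) * Nat.card K ^ d := by
  have := Fintype.ofFinite (Grass K V d)
  let flip : (Σ v : V, {L : Grass K V d // v ∈ L.1}) ≃ Σ L : Grass K V d, L.1 :=
    { toFun x := ⟨x.2.1, x.1, x.2.2⟩
      invFun x := ⟨x.2.1, x.1, x.2.2⟩ }
  rw [← Nat.card_sigma, Nat.card_congr flip, Nat.card_sigma]
  have hL (L : Grass K V d) : Nat.card L.1 = Nat.card K ^ d := by
    rw [Module.natCard_eq_pow_finrank (K := K), L.2]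
  simp only [hL, Finset.sum_const, Finset.card_univ, smul_eq_mul, Nat.card_eq_fintype_card]

lemma uniformProb_mem_le [Finite V] {v : V} (hv : v ≠ 0) :
    uniformProb (fun L : Grass K V d ↦ v ∈ L.1) ≤
      (Nat.card K : ℚ) ^ d / Nat.card K ^ finrank K V := by
  have := Fintype.ofFinite V
  have hV : (Nat.card V : ℚ) = Nat.card K ^ finrank K V := by
    exact_mod_cast Module.natCard_eq_pow_finrank (K := K) (V := V)
  have hVpos : (0 : ℚ) < Nat.card V := by exact_mod_cast Nat.card_pos
  rw [← hV, le_div_iff₀ hVpos, mul_comm]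
  -- The average runs over all `w`: since `0` lies in every subspace, it need not be excluded.
  calc (Nat.card V : ℚ) * uniformProb (fun L : Grass K V d ↦ v ∈ L.1)
      ≤ ∑ w : V, uniformProb (fun L : Grass K V d ↦ w ∈ L.1) := by
        rw [Nat.card_eq_fintype_card, ← nsmul_eq_mul]
        exact Finset.card_nsmul_le_sum _ _ _ fun w _ ↦ uniformProb_mem_le_uniformProb_mem hv w
    _ = Nat.card (Grass K V d) * Nat.card K ^ d / Nat.card (Grass K V d) := by
        simp only [uniformProb, ← Finset.sum_div]
        exact_mod_cast congrArg (fun m : ℕ ↦ (m / Nat.card (Grass K V d) : ℚ)) sum_natCard_grass_mem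
    _ ≤ Nat.card K ^ d := by
        rw [mul_div_right_comm]
        exact mul_le_of_le_one_left (by positivity) (div_self_le_one _)

lemma uniformProb_not_disjoint_le [Finite V] (S : Submodule K V) :
    uniformProb (fun L : Grass K V d ↦ ¬Disjoint S L.1) ≤
      (Nat.card K : ℚ) ^ (finrank K S + d) / Nat.card K ^ finrank K V := by
  have hS : (Nat.card S : ℚ) = Nat.card K ^ finrank K S := by
    exact_mod_cast Module.natCard_eq_pow_finrank (K := K) (V := S)
  have hmem (v : S) : uniformProb (fun L : Grass K V d ↦ v ≠ 0 ∧ (v : V) ∈ L.1) ≤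
      (Nat.card K : ℚ) ^ d / Nat.card K ^ finrank K V := by
    obtain rfl | hv := eq_or_ne v 0
    · simp only [ne_eq, not_true, false_and, uniformProb_false]
      positivity
    · exact (uniformProb_le_of_imp fun L ↦ And.right).trans
        (uniformProb_mem_le (by simpa using hv))
  calc uniformProb (fun L : Grass K V d ↦ ¬Disjoint S L.1)
      ≤ uniformProb (fun L : Grass K V d ↦ ∃ v : S, v ≠ 0 ∧ (v : V) ∈ L.1) :=
        uniformProb_le_of_imp fun L hL ↦ by
          simpa [Submodule.disjoint_def, and_comm, and_left_comm] using hL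
    _ ≤ Nat.card S * ((Nat.card K : ℚ) ^ d / Nat.card K ^ finrank K V) :=
        uniformProb_exists_le_card_mul hmem
    _ = (Nat.card K : ℚ) ^ (finrank K S + d) / Nat.card K ^ finrank K V := by
        rw [hS, pow_add, mul_div_assoc]

lemma uniformProb_inf_ne_le [Finite K] [Finite V] {R : Submodule K V} (L : GrassAbove R d) :
    uniformProb (fun M : GrassAbove R d ↦ L.1 ⊓ M.1 ≠ R) ≤
      (Nat.card K : ℚ) ^ (2 * d) / Nat.card K ^ (finrank K V + finrank K R) := by
  obtain ⟨e, rfl⟩ : ∃ e, d = finrank K R + e :=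
    Nat.exists_eq_add_of_le (L.2.1 ▸ Submodule.finrank_mono L.2.2)
  obtain ⟨S, rfl⟩ := (grassQuotientEquiv R e).surjective L
  have : Finite (V ⧸ R) := Finite.of_surjective _ R.mkQ_surjective
  have hq : (Nat.card K : ℚ) ≠ 0 := by exact_mod_cast Nat.card_pos.ne'
  calc uniformProb (fun M : GrassAbove R (finrank K R + e) ↦ (grassQuotientEquiv R e S).1 ⊓ M.1 ≠ R)
      = uniformProb (fun M : Grass K (V ⧸ R) e ↦ ¬Disjoint S.1 M.1) := by
        rw [← uniformProb_comp_equiv (grassQuotientEquiv R e)]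
        simp only [coe_grassQuotientEquiv, ne_eq, comap_mkQ_inf_comap_mkQ_eq_iff]
    _ ≤ (Nat.card K : ℚ) ^ (finrank K S.1 + e) / Nat.card K ^ finrank K (V ⧸ R) :=
        uniformProb_not_disjoint_le S.1
    _ = (Nat.card K : ℚ) ^ (2 * (finrank K R + e)) / Nat.card K ^ (finrank K V + finrank K R) := by
        rw [S.2, ← R.finrank_quotient_add_finrank, div_eq_div_iff (by positivity) (by positivity)]
        ring

variable (K V) in
/-- The sample space: an `r`-dimensional `R` together with a family of `d`-dimensional subspaces
containing `R`. The number of such families is the same for every `R`, so a uniform element is a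
uniform `R` followed by independent uniform subspaces above it. -/
abbrev GrassFamilyAbove (ι : Type*) (r d : ℕ) : Type _ :=
  {p : Submodule K V × (ι → Submodule K V) //
    finrank K p.1 = r ∧ ∀ i, finrank K (p.2 i) = d ∧ p.1 ≤ p.2 i}

/-- Two-stage sampling: first the base `R`, then the members above it. -/
def grassFamilyAboveEquiv (ι : Type*) :
    GrassFamilyAbove K V ι r d ≃ Σ R : Grass K V r, ι → GrassAbove R.1 d where
  toFun p := ⟨⟨p.1.1, p.2.1⟩, fun i ↦ ⟨p.1.2 i, p.2.2 i⟩⟩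
  invFun x := ⟨(x.1, fun i ↦ x.2 i), x.1.2, fun i ↦ (x.2 i).2⟩

lemma nonempty_grassFamilyAbove (ι : Type*) (hrd : r ≤ d) (hd : d ≤ finrank K V) :
    Nonempty (GrassFamilyAbove K V ι r d) := by
  obtain ⟨L, rfl⟩ := exists_submodule_finrank_eq hd
  obtain ⟨R, hRL, hR⟩ := exists_submodule_le_finrank_eq L hrd
  exact ⟨(R, fun _ ↦ L), hR, fun _ ↦ ⟨rfl, hRL⟩⟩

lemma uniformProb_grassFamilyAbove_inf_ne_le [Finite K] [Finite V] {ι : Type*} [Finite ι] {i j : ι}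
    (hij : i ≠ j) :
    uniformProb (fun p : GrassFamilyAbove K V ι r d ↦ p.1.2 i ⊓ p.1.2 j ≠ p.1.1) ≤
      (Nat.card K : ℚ) ^ (2 * d) / Nat.card K ^ (finrank K V + r) := by
  have hc : 0 ≤ (Nat.card K : ℚ) ^ (2 * d) / Nat.card K ^ (finrank K V + r) := by positivity
  have hfiber (R : Grass K V r) :
      uniformProb (fun f : ι → GrassAbove R.1 d ↦ (f i).1 ⊓ (f j).1 ≠ R.1) ≤
        (Nat.card K : ℚ) ^ (2 * d) / Nat.card K ^ (finrank K V + r) :=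
    uniformProb_pi_pair_le (p := fun L M : GrassAbove R.1 d ↦ L.1 ⊓ M.1 ≠ R.1) hij hc fun L ↦ by
      simpa only [R.2] using uniformProb_inf_ne_le L
  calc uniformProb (fun p : GrassFamilyAbove K V ι r d ↦ p.1.2 i ⊓ p.1.2 j ≠ p.1.1)
      = uniformProb (fun x : Σ R : Grass K V r, ι → GrassAbove R.1 d ↦
          (x.2 i).1 ⊓ (x.2 j).1 ≠ x.1.1) :=
        uniformProb_comp_equiv (grassFamilyAboveEquiv ι) fun x ↦ (x.2 i).1 ⊓ (x.2 j).1 ≠ x.1.1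
    _ ≤ _ := uniformProb_sigma_le hc hfiber

end Grass

theorem stmt_13_general {K V ι : Type*} [Field K] [AddCommGroup V] [Module K V] [Finite K]
    [Finite V] [Finite ι] {r d : ℕ} (hrd : r ≤ d) (hd : d ≤ finrank K V) :
    1 - (Nat.card ι : ℚ) ^ 2 * Nat.card K ^ (2 * d) / Nat.card K ^ (finrank K V + r) ≤
      uniformProb fun p : GrassFamilyAbove K V ι r d ↦
        ∀ i j, i ≠ j → p.1.2 i ⊓ p.1.2 j = p.1.1 := by
  have := nonempty_grassFamilyAbove ι hrd hd
  let bad (x : ι × ι) (p : GrassFamilyAbove K V ι r d) : Prop :=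
    x.1 ≠ x.2 ∧ p.1.2 x.1 ⊓ p.1.2 x.2 ≠ p.1.1
  have hbad (x : ι × ι) : uniformProb (bad x) ≤
      (Nat.card K : ℚ) ^ (2 * d) / Nat.card K ^ (finrank K V + r) := by
    by_cases hx : x.1 = x.2
    · simp only [bad, hx, ne_eq, not_true, false_and, uniformProb_false]
      positivity
    · exact (uniformProb_le_of_imp fun _ ↦ And.right).trans
        (uniformProb_grassFamilyAbove_inf_ne_le hx)
  have hunion := uniformProb_exists_le_card_mul hbad
  rw [Nat.card_prod, Nat.cast_mul, ← sq, ← mul_div_assoc] at hunion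
  calc 1 - (Nat.card ι : ℚ) ^ 2 * Nat.card K ^ (2 * d) / Nat.card K ^ (finrank K V + r)
      ≤ 1 - uniformProb (fun p ↦ ∃ x, bad x p) := sub_le_sub_left hunion 1
    _ = uniformProb (fun p ↦ ¬∃ x, bad x p) := (uniformProb_not _).symm
    _ ≤ _ := uniformProb_le_of_imp fun p hp i j hij ↦
      not_not.1 fun hne ↦ hp ⟨(i, j), hij, hne⟩

/-- For R ∈ Grass(n, 2(1−δ)ℓ) uniform (here 2(1−δ)ℓ = 2ℓ − t) and L_1,…,L_k ∈ Grass(n, 2ℓ)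
uniform and independent conditioned on L_i ⊇ R, the probability that L_i ∩ L_j = R for all
i ≠ j is at least 1 − k²·2^{4ℓ−n}. -/
theorem stmt_13 (n ℓ t k : ℕ) (ht : t ≤ 2 * ℓ) (hn : 2 * ℓ ≤ n) :
    (1 : ℚ) - (k : ℚ) ^ 2 * 2 ^ (4 * ℓ) / 2 ^ n ≤
      (Nat.card {p : Submodule (ZMod 2) (Fin n → ZMod 2) ×
            (Fin k → Submodule (ZMod 2) (Fin n → ZMod 2)) //
          (Module.finrank (ZMod 2) p.1 = 2 * ℓ - t ∧
            ∀ i, Module.finrank (ZMod 2) (p.2 i) = 2 * ℓ ∧ p.1 ≤ p.2 i) ∧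
          ∀ i j, i ≠ j → p.2 i ⊓ p.2 j = p.1} : ℚ) /
        (Nat.card {p : Submodule (ZMod 2) (Fin n → ZMod 2) ×
            (Fin k → Submodule (ZMod 2) (Fin n → ZMod 2)) //
          Module.finrank (ZMod 2) p.1 = 2 * ℓ - t ∧
            ∀ i, Module.finrank (ZMod 2) (p.2 i) = 2 * ℓ ∧ p.1 ≤ p.2 i} : ℚ) := by
  rw [← uniformProb_subtype]
  refine le_trans ?_ (stmt_13_general (Nat.sub_le (2 * ℓ) t) (by simpa using hn))
  rw [Nat.card_zmod, Nat.card_fin, finrank_fin_fun, Nat.cast_ofNat, ← mul_assoc]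
  gcongr <;> simp
end

section
/- The inner product expression dominates the subspace event: with F, G the matrix-indicator functions of subspace families 𝓛 ⊆ Grass(n,2ℓ) and 𝓡 ⊆ Grass(n,2(1−δ)ℓ), and T the column-extension averaging operator, we have Pr[R ∈ 𝓡 and L_1,…,L_k ∈ 𝓛] ≤ 2⟨(TF)^k, G⟩, provided n ≥ 2ℓ + log(2(2ℓ + 2δkℓ)). -/
/-!
Sampling a frame, that is `(M, v₁, …, v_k)` with `M` and every `[M, vᵢ]` of independent columns,
and taking column spaces gives the same distribution as sampling `R` and the `Lᵢ ⊇ R`: the number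
of frames with prescribed column spaces depends only on the dimensions and the size of the field.
Hence the subspace event has the same probability as its pullback conditioned on being a frame.
By Bernoulli's inequality, frames make up at least half of all tuples of matrices when the ambient
space is large, so dropping the conditioning costs at most a factor of two. What remains is the
probability that a uniform `(M, v₁, …, v_k)` is a frame in the pulled-back event, and this is
`⟨(TF)^k, G⟩` because the `vᵢ` are independent given `M`.
-/

open Finset Module Submodule
open scoped BigOperators

section Counting

variable {α β ι : Type*}

lemma natCard_subtype_pi_forall [Fintype ι] (p : ι → β → Prop) :
    Nat.card {f : ι → β // ∀ i, p i (f i)} = ∏ i, Nat.card {b // p i b} := by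
  rw [Nat.card_congr (Equiv.subtypePiEquivPi (p := p)), Nat.card_pi]

lemma sum_indicator_one_comp [Fintype α] (s : Set β) (f : α → β) :
    ∑ a, s.indicator (fun _ => (1 : ℝ)) (f a) = Nat.card {a // f a ∈ s} := by
  classical
  simp only [Set.indicator_apply, sum_boole, Nat.card_eq_fintype_card, Fintype.card_subtype]

variable [Finite β]

lemma natCard_subtype_prod_eq_sum [Fintype α] (p : α → β → Prop) :
    Nat.card {x : α × β // p x.1 x.2} = ∑ a, Nat.card {b // p a b} := by
  rw [Nat.card_congr (Equiv.subtypeProdEquivSigmaSubtype p), Nat.card_sigma]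

lemma natCard_subtype_prod_eq_mul [Finite α] {p : α → Prop} {r : α → β → Prop} {c : ℕ}
    (hc : ∀ a, p a → Nat.card {b // r a b} = c) :
    Nat.card {x : α × β // p x.1 ∧ r x.1 x.2} = Nat.card {a // p a} * c := by
  classical
  have := Fintype.ofFinite α
  have hfiber (a : α) : Nat.card {b // p a ∧ r a b} = if p a then c else 0 := by
    split_ifs with ha
    · simpa only [ha, true_and] using hc a ha
    · simp [ha]
  rw [natCard_subtype_prod_eq_sum (fun a b => p a ∧ r a b), sum_congr rfl fun a _ => hfiber a,
    ← sum_filter, sum_const, smul_eq_mul, Nat.card_eq_fintype_card, Fintype.card_subtype]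

lemma natCard_subtype_eq_mul_of_fiber [Finite α] {p : α → Prop} {r : β → Prop} {f : α → β} {c : ℕ}
    (hf : ∀ a, p a → r (f a)) (hc : ∀ b, r b → Nat.card {a // p a ∧ f a = b} = c) :
    Nat.card {a // p a} = Nat.card {b // r b} * c := by
  rw [← natCard_subtype_prod_eq_mul hc]
  exact Nat.card_congr
    { toFun := fun a => ⟨(f a, a), hf a a.2, a.2, rfl⟩
      invFun := fun x => ⟨x.1.2, x.2.2.1⟩
      left_inv := fun _ => rfl
      right_inv := fun x => Subtype.ext (Prod.ext x.2.2.2 rfl) }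

lemma natCard_subtype_prod_pi_eq_mul [Finite α] [Fintype ι] {p : α → Prop}
    {r : ι → α → β → Prop} {c : ℕ} (hc : ∀ i a, p a → Nat.card {b // r i a b} = c) :
    Nat.card {x : α × (ι → β) // p x.1 ∧ ∀ i, r i x.1 (x.2 i)} =
      Nat.card {a // p a} * c ^ Fintype.card ι := by
  refine natCard_subtype_prod_eq_mul (r := fun a (f : ι → β) => ∀ i, r i a (f i)) fun a ha => ?_
  rw [natCard_subtype_pi_forall, prod_congr rfl fun i _ => hc i a ha, prod_const, card_univ]

end Counting

lemma pow_le_two_mul_tsub_pow {m x y : ℕ} (h : 2 * m * y ≤ x) : x ^ m ≤ 2 * (x - y) ^ m := by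
  rcases m.eq_zero_or_pos with rfl | hm
  · simp
  rcases x.eq_zero_or_pos with rfl | hx
  · simp [hm.ne']
  have hyx : y ≤ x := by nlinarith
  have hx' : (0 : ℝ) < x := by exact_mod_cast hx
  have hyx' : (y : ℝ) / x ≤ 1 := (div_le_one hx').2 (by exact_mod_cast hyx)
  have hmy : m * ((y : ℝ) / x) ≤ 1 / 2 := by
    rw [← mul_div_assoc, div_le_iff₀ hx']
    have : (2 : ℝ) * m * y ≤ x := by exact_mod_cast h
    linarith
  have bernoulli : 1 + m * ((1 - (y : ℝ) / x) - 1) ≤ (1 - (y : ℝ) / x) ^ m :=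
    one_add_mul_sub_le_pow (by linarith) m
  have hfactor : ((x : ℝ) - y) ^ m = x ^ m * (1 - (y : ℝ) / x) ^ m := by
    rw [← mul_pow, mul_sub, mul_one, mul_div_cancel₀ _ hx'.ne']
  have hhalf : (1 : ℝ) ≤ 2 * (1 - (y : ℝ) / x) ^ m := by linarith
  have hreal : (x : ℝ) ^ m ≤ 2 * ((x : ℝ) - y) ^ m := by
    rw [hfactor, mul_left_comm]
    exact le_mul_of_one_le_right (by positivity) hhalf
  rw [← Nat.cast_sub hyx] at hreal
  exact_mod_cast hreal

section Extensions

/-- The number of ways to extend an independent `a`-tuple by `b` further vectors to an independent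
`(a + b)`-tuple in a `d`-dimensional space over a field with `q` elements. Truncated subtraction
does no harm for `a ≤ d`: if `d < a + b`, then the factor at `i = d - a` vanishes. -/
def extensionCount (q d a b : ℕ) : ℕ :=
  ∏ i ∈ range b, (q ^ d - q ^ (a + i))

lemma pow_tsub_pow_pow_le_extensionCount {q a b m : ℕ} (hq : 0 < q) (d : ℕ) (hm : a + b ≤ m) :
    (q ^ d - q ^ m) ^ b ≤ extensionCount q d a b := by
  rw [extensionCount, ← card_range b, ← prod_const, card_range]
  refine prod_le_prod' fun i hi => tsub_le_tsub_left (Nat.pow_le_pow_right hq ?_) _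
  have := mem_range.1 hi
  omega

variable {K V : Type*} [DivisionRing K] [AddCommGroup V] [Module K V]

lemma forall_append_mem_iff {a b : ℕ} {M : Fin a → V} {v : Fin b → V} {L : Submodule K V} :
    (∀ i, Fin.append M v i ∈ L) ↔ (∀ i, M i ∈ L) ∧ ∀ i, v i ∈ L := by
  simp only [Fin.forall_fin_add, Fin.append_left, Fin.append_right]

lemma linearIndependent_append_snoc {a b : ℕ} {M : Fin a → V} {v : Fin b → V} {x : V} :
    LinearIndependent K (Fin.append M (Fin.snoc v x : Fin (b + 1) → V)) ↔
      LinearIndependent K (Fin.append M v) ∧ x ∉ span K (Set.range (Fin.append M v)) := by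
  rw [Fin.append_snoc]
  exact linearIndependent_finSnoc

lemma span_range_eq_iff_forall_mem {ι : Type*} [Fintype ι] {M : ι → V}
    (hM : LinearIndependent K M) {L : Submodule K V} [FiniteDimensional K L]
    (hL : finrank K L = Fintype.card ι) : span K (Set.range M) = L ↔ ∀ i, M i ∈ L := by
  have hle : span K (Set.range M) ≤ L ↔ ∀ i, M i ∈ L := span_le.trans Set.range_subset_iff
  rw [← hle]
  exact ⟨le_of_eq, fun h => eq_of_le_of_finrank_eq h (by rw [finrank_span_eq_card hM, hL])⟩

variable [Finite V]

lemma natCard_mem_and_notMem_span {ι : Type*} [Fintype ι] {M : ι → V}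
    (hM : LinearIndependent K M) {L : Submodule K V} (hML : ∀ i, M i ∈ L) :
    Nat.card {x // x ∈ L ∧ x ∉ span K (Set.range M)} =
      Nat.card K ^ finrank K L - Nat.card K ^ Fintype.card ι := by
  have hspan : span K (Set.range M) ≤ L := span_le.2 (Set.range_subset_iff.2 hML)
  rw [← finrank_span_eq_card hM, ← natCard_eq_pow_finrank, ← natCard_eq_pow_finrank]
  exact Set.ncard_sdiff hspan

lemma natCard_mem_linearIndependent_append {a : ℕ} {M : Fin a → V} (hM : LinearIndependent K M)
    {L : Submodule K V} (hML : ∀ i, M i ∈ L) (b : ℕ) :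
    Nat.card {v : Fin b → V // (∀ i, v i ∈ L) ∧ LinearIndependent K (Fin.append M v)} =
      extensionCount (Nat.card K) (finrank K L) a b := by
  induction b with
  | zero =>
    have hempty (v : Fin 0 → V) : LinearIndependent K (Fin.append M v) := by
      rwa [Fin.append_right_nil M v rfl]
    simp [hempty, extensionCount]
  | succ b ih =>
    have hnext (v : Fin b → V) (hv : (∀ i, v i ∈ L) ∧ LinearIndependent K (Fin.append M v)) :
        Nat.card {x // x ∈ L ∧ x ∉ span K (Set.range (Fin.append M v))} =
          Nat.card K ^ finrank K L - Nat.card K ^ (a + b) := by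
      simpa only [Fintype.card_fin] using
        natCard_mem_and_notMem_span hv.2 (forall_append_mem_iff.2 ⟨hML, hv.1⟩)
    rw [extensionCount, prod_range_succ, ← extensionCount, ← ih,
      ← natCard_subtype_prod_eq_mul hnext]
    refine (Nat.card_congr <| ((Equiv.prodComm _ _).trans
      (Fin.snocEquiv fun _ : Fin (b + 1) => V)).subtypeEquiv fun x => ?_).symm
    change _ ↔ (∀ i, (Fin.snoc x.1 x.2 : Fin (b + 1) → V) i ∈ L) ∧
      LinearIndependent K (Fin.append M (Fin.snoc x.1 x.2 : Fin (b + 1) → V))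
    simp only [linearIndependent_append_snoc, Fin.forall_fin_succ', Fin.snoc_castSucc,
      Fin.snoc_last]
    tauto

lemma natCard_mem_linearIndependent (L : Submodule K V) (a : ℕ) :
    Nat.card {M : Fin a → V // (∀ i, M i ∈ L) ∧ LinearIndependent K M} =
      extensionCount (Nat.card K) (finrank K L) 0 a := by
  have hcast (M : Fin a → V) : LinearIndependent K (Fin.append (Fin.elim0 : Fin 0 → V) M) ↔
      LinearIndependent K M := by
    rw [Fin.elim0_append]
    exact linearIndependent_equiv (finCongr (zero_add a))
  have h := natCard_mem_linearIndependent_append (K := K) (M := (Fin.elim0 : Fin 0 → V))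
    linearIndependent_empty_type (L := L) (fun i => i.elim0) a
  simpa only [hcast] using h

lemma natCard_linearIndependent_span_eq {L : Submodule K V} {a : ℕ} (hL : finrank K L = a) :
    Nat.card {M : Fin a → V // LinearIndependent K M ∧ span K (Set.range M) = L} =
      extensionCount (Nat.card K) a 0 a := by
  rw [← hL, ← natCard_mem_linearIndependent L, hL]
  refine Nat.card_congr (Equiv.subtypeEquivRight fun M => ?_)
  rw [and_comm (b := LinearIndependent K M)]
  exact and_congr_right fun hM => span_range_eq_iff_forall_mem hM (by simpa using hL)

lemma natCard_linearIndependent_append_span_eq {a b : ℕ} {M : Fin a → V}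
    (hM : LinearIndependent K M) {L : Submodule K V} (hL : finrank K L = a + b)
    (hML : span K (Set.range M) ≤ L) :
    Nat.card {v : Fin b → V // LinearIndependent K (Fin.append M v) ∧
      span K (Set.range (Fin.append M v)) = L} = extensionCount (Nat.card K) (a + b) a b := by
  have hML' : ∀ i, M i ∈ L := Set.range_subset_iff.1 (span_le.1 hML)
  have hcount := natCard_mem_linearIndependent_append hM hML' b
  rw [hL] at hcount
  rw [← hcount]
  refine Nat.card_congr (Equiv.subtypeEquivRight fun v => ?_)
  rw [and_comm (b := LinearIndependent K _)]
  refine and_congr_right fun hMv => ?_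
  rw [span_range_eq_iff_forall_mem hMv (by simpa using hL), forall_append_mem_iff]
  exact and_iff_right hML'

end Extensions

section Fans

variable (K : Type*) {V ι : Type*} [DivisionRing K] [AddCommGroup V] [Module K V] {a b : ℕ}

variable {K} in
/-- The pairs `(R, L)` of the sampling experiment: `R` has dimension `a`, and each `L i` is an
`m`-dimensional space containing `R`. -/
def IsFan (a m : ℕ) (p : Submodule K V × (ι → Submodule K V)) : Prop :=
  finrank K p.1 = a ∧ ∀ i, finrank K (p.2 i) = m ∧ p.1 ≤ p.2 i

/-- `(M, v)` is a frame if `M` and all the extended matrices `[M, v i]` have independent columns.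
Matrices are encoded as tuples of columns. -/
def IsFrame (x : (Fin a → V) × (ι → Fin b → V)) : Prop :=
  LinearIndependent K x.1 ∧ ∀ i, LinearIndependent K (Fin.append x.1 (x.2 i))

/-- The column spaces of `M` and of the extended matrices `[M, v i]`. -/
def columnSpaces (x : (Fin a → V) × (ι → Fin b → V)) : Submodule K V × (ι → Submodule K V) :=
  (span K (Set.range x.1), fun i => span K (Set.range (Fin.append x.1 (x.2 i))))

variable {K}

lemma IsFrame.isFan_columnSpaces {x : (Fin a → V) × (ι → Fin b → V)} (hx : IsFrame K x) :
    IsFan a (a + b) (columnSpaces K x) := by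
  refine ⟨(finrank_span_eq_card hx.1).trans (Fintype.card_fin a), fun i => ⟨?_, span_mono ?_⟩⟩
  · exact (finrank_span_eq_card (hx.2 i)).trans (Fintype.card_fin (a + b))
  · exact Set.range_subset_iff.2 fun j => ⟨Fin.castAdd b j, Fin.append_left _ _ j⟩

variable [Finite V] [Fintype ι]

lemma natCard_isFrame_columnSpaces_eq {p : Submodule K V × (ι → Submodule K V)}
    (hp : IsFan a (a + b) p) :
    Nat.card {x : (Fin a → V) × (ι → Fin b → V) // IsFrame K x ∧ columnSpaces K x = p} =
      extensionCount (Nat.card K) a 0 a *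
        extensionCount (Nat.card K) (a + b) a b ^ Fintype.card ι := by
  rw [← natCard_linearIndependent_span_eq hp.1, ← natCard_subtype_prod_pi_eq_mul
    (r := fun i M (v : Fin b → V) => LinearIndependent K (Fin.append M v) ∧
      span K (Set.range (Fin.append M v)) = p.2 i)]
  · refine Nat.card_congr (Equiv.subtypeEquivRight fun x => ?_)
    simp only [IsFrame, columnSpaces, Prod.ext_iff, funext_iff, forall_and]
    tauto
  · rintro i M ⟨hM, hMp⟩
    exact natCard_linearIndependent_append_span_eq hM (hp.2 i).1 (hMp.trans_le (hp.2 i).2)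

lemma natCard_isFrame_and_columnSpaces (E : Submodule K V × (ι → Submodule K V) → Prop) :
    Nat.card {x : (Fin a → V) × (ι → Fin b → V) // IsFrame K x ∧ E (columnSpaces K x)} =
      Nat.card {p : Submodule K V × (ι → Submodule K V) // IsFan a (a + b) p ∧ E p} *
        (extensionCount (Nat.card K) a 0 a *
          extensionCount (Nat.card K) (a + b) a b ^ Fintype.card ι) := by
  refine natCard_subtype_eq_mul_of_fiber (fun x hx => ⟨hx.1.isFan_columnSpaces, hx.2⟩) ?_
  rintro p ⟨hp, hEp⟩
  rw [← natCard_isFrame_columnSpaces_eq hp]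
  refine Nat.card_congr (Equiv.subtypeEquivRight fun x => ?_)
  exact ⟨fun h => ⟨h.1.1, h.2⟩, fun h => ⟨⟨h.1, h.2 ▸ hEp⟩, h.2⟩⟩

lemma natCard_isFrame :
    Nat.card {x : (Fin a → V) × (ι → Fin b → V) // IsFrame K x} =
      extensionCount (Nat.card K) (finrank K V) 0 a *
        extensionCount (Nat.card K) (finrank K V) a b ^ Fintype.card ι := by
  have hfst := natCard_mem_linearIndependent (⊤ : Submodule K V) a
  simp only [mem_top, implies_true, true_and, finrank_top] at hfst
  rw [← hfst]
  refine natCard_subtype_prod_pi_eq_mul (ι := ι) (p := fun M : Fin a → V => LinearIndependent K M)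
    (r := fun _ M (v : Fin b → V) => LinearIndependent K (Fin.append M v)) fun _ M hM => ?_
  simpa using natCard_mem_linearIndependent_append hM (L := ⊤) (fun _ => mem_top) b

lemma pow_le_two_mul_natCard_isFrame [Finite K]
    (h : 2 * (a + b * Fintype.card ι) * Nat.card K ^ (a + b) ≤ Nat.card V) :
    Nat.card V ^ (a + b * Fintype.card ι) ≤
      2 * Nat.card {x : (Fin a → V) × (ι → Fin b → V) // IsFrame K x} := by
  rw [natCard_isFrame]
  rw [natCard_eq_pow_finrank (K := K) (V := V)] at h ⊢
  refine (pow_le_two_mul_tsub_pow h).trans (Nat.mul_le_mul_left 2 ?_)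
  rw [pow_add, pow_mul]
  gcongr
  · exact pow_tsub_pow_pow_le_extensionCount Nat.card_pos _ (by omega)
  · exact pow_tsub_pow_pow_le_extensionCount Nat.card_pos _ le_rfl

lemma natCard_isFan_and_div_le [Finite K]
    (h : 2 * (a + b * Fintype.card ι) * Nat.card K ^ (a + b) ≤ Nat.card V)
    (E : Submodule K V × (ι → Submodule K V) → Prop) :
    (Nat.card {p : Submodule K V × (ι → Submodule K V) // IsFan a (a + b) p ∧ E p} : ℝ) /
        Nat.card {p : Submodule K V × (ι → Submodule K V) // IsFan a (a + b) p} ≤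
      2 * (Nat.card {x : (Fin a → V) × (ι → Fin b → V) // IsFrame K x ∧ E (columnSpaces K x)} /
        (Nat.card V : ℝ) ^ (a + b * Fintype.card ι)) := by
  have hhalf := pow_le_two_mul_natCard_isFrame (ι := ι) h
  have hframes := natCard_isFrame_and_columnSpaces (K := K) (V := V) (ι := ι) (a := a) (b := b)
    fun _ => True
  simp only [and_true] at hframes
  rw [hframes] at hhalf
  rw [natCard_isFrame_and_columnSpaces E]
  have hN : 0 < Nat.card V ^ (a + b * Fintype.card ι) := pow_pos Nat.card_pos _
  generalize extensionCount (Nat.card K) a 0 a *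
    extensionCount (Nat.card K) (a + b) a b ^ Fintype.card ι = c at *
  have hfans : 0 < Nat.card {p : Submodule K V × (ι → Submodule K V) // IsFan a (a + b) p} := by
    by_contra! h0
    rw [Nat.le_zero.1 h0, zero_mul, mul_zero] at hhalf
    exact hN.not_ge hhalf
  rw [mul_div_assoc', div_le_div_iff₀ (by exact_mod_cast hfans) (by exact_mod_cast hN)]
  norm_cast
  rw [mul_left_comm 2, mul_assoc, mul_assoc 2, mul_comm c]
  exact Nat.mul_le_mul_left _ hhalf

end Fans

section InnerProduct

variable {K V : Type*} [DivisionRing K] [AddCommGroup V] [Module K V]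

/-- The matrix indicator `F` (or `G`) of a family `𝓢` of subspaces: it is `1` on the matrices whose
columns are independent and span a member of `𝓢`, and `0` elsewhere. -/
noncomputable def familyIndicator {ι : Type*} (𝓢 : Submodule K V → Prop) : (ι → V) → ℝ :=
  Set.indicator {M | LinearIndependent K M ∧ 𝓢 (span K (Set.range M))} fun _ => 1

lemma natCard_isFrame_mk_and_columnSpaces {a b k : ℕ} (𝓛 𝓡 : Submodule K V → Prop) (M : Fin a → V) :
    (Nat.card {v : Fin k → Fin b → V // IsFrame K (M, v) ∧
      (𝓡 (columnSpaces K (M, v)).1 ∧ ∀ i, 𝓛 ((columnSpaces K (M, v)).2 i))} : ℝ) =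
      (Nat.card {v : Fin b → V // LinearIndependent K (Fin.append M v) ∧
        𝓛 (span K (Set.range (Fin.append M v)))} : ℝ) ^ k * familyIndicator 𝓡 M := by
  by_cases hM : LinearIndependent K M ∧ 𝓡 (span K (Set.range M))
  · have hG : familyIndicator 𝓡 M = 1 := by simp [familyIndicator, hM]
    have hpi := natCard_subtype_pi_forall fun (_ : Fin k) (v : Fin b → V) =>
      LinearIndependent K (Fin.append M v) ∧ 𝓛 (span K (Set.range (Fin.append M v)))
    rw [prod_const, card_univ, Fintype.card_fin] at hpi
    rw [hG, mul_one, ← Nat.cast_pow, ← hpi]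
    simp only [IsFrame, columnSpaces, hM.1, hM.2, true_and, forall_and]
  · have hG : familyIndicator 𝓡 M = 0 := by simp [familyIndicator, hM]
    have : IsEmpty {v : Fin k → Fin b → V // IsFrame K (M, v) ∧
        (𝓡 (columnSpaces K (M, v)).1 ∧ ∀ i, 𝓛 ((columnSpaces K (M, v)).2 i))} :=
      ⟨fun v => hM ⟨v.2.1.1, v.2.2.1⟩⟩
    rw [hG, mul_zero, Nat.card_of_isEmpty, Nat.cast_zero]

/-- The operator `T` that averages a function of matrices with `a + b` columns over the last `b`
of them. -/
noncomputable def columnExtensionAvg [Fintype V] {a b : ℕ} (f : (Fin (a + b) → V) → ℝ)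
    (M : Fin a → V) : ℝ :=
  𝔼 v : Fin b → V, f (Fin.append M v)

variable [Fintype V]

lemma columnExtensionAvg_familyIndicator {a b : ℕ} (𝓛 : Submodule K V → Prop) (M : Fin a → V) :
    columnExtensionAvg (b := b) (familyIndicator 𝓛) M =
      Nat.card {v : Fin b → V // LinearIndependent K (Fin.append M v) ∧
        𝓛 (span K (Set.range (Fin.append M v)))} / (Nat.card V : ℝ) ^ b := by
  rw [columnExtensionAvg, Fintype.expect_eq_sum_div_card]
  simp only [familyIndicator, sum_indicator_one_comp]
  simp

lemma expect_columnExtensionAvg_pow_mul (a b k : ℕ) (𝓛 𝓡 : Submodule K V → Prop) :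
    𝔼 M : Fin a → V, columnExtensionAvg (b := b) (familyIndicator 𝓛) M ^ k * familyIndicator 𝓡 M =
      Nat.card {x : (Fin a → V) × (Fin k → Fin b → V) // IsFrame K x ∧
        (𝓡 (columnSpaces K x).1 ∧ ∀ i, 𝓛 ((columnSpaces K x).2 i))} /
          (Nat.card V : ℝ) ^ (a + b * k) := by
  rw [natCard_subtype_prod_eq_sum (fun M v => IsFrame K (M, v) ∧
    (𝓡 (columnSpaces K (M, v)).1 ∧ ∀ i, 𝓛 ((columnSpaces K (M, v)).2 i))),
    Fintype.expect_eq_sum_div_card]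
  rw [Nat.cast_sum, sum_div, sum_div]
  refine sum_congr rfl fun M _ => ?_
  rw [natCard_isFrame_mk_and_columnSpaces, columnExtensionAvg_familyIndicator, Fintype.card_fun,
    Fintype.card_fin, Nat.cast_pow, ← Nat.card_eq_fintype_card (α := V), pow_add, pow_mul]
  ring

end InnerProduct

theorem stmt_14_general {K V : Type*} [DivisionRing K] [Finite K] [AddCommGroup V] [Module K V]
    [Fintype V] (a b k : ℕ) (𝓛 𝓡 : Submodule K V → Prop)
    (h : 2 * (a + b * k) * Nat.card K ^ (a + b) ≤ Nat.card V) :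
    (Nat.card {p : Submodule K V × (Fin k → Submodule K V) //
        IsFan a (a + b) p ∧ (𝓡 p.1 ∧ ∀ i, 𝓛 (p.2 i))} : ℝ) /
      Nat.card {p : Submodule K V × (Fin k → Submodule K V) // IsFan a (a + b) p} ≤
    2 * 𝔼 M : Fin a → V, columnExtensionAvg (b := b) (familyIndicator 𝓛) M ^ k *
      familyIndicator 𝓡 M := by
  have hfan := natCard_isFan_and_div_le (K := K) (V := V) (ι := Fin k) (a := a) (b := b)
    (by rwa [Fintype.card_fin]) fun p => 𝓡 p.1 ∧ ∀ i, 𝓛 (p.2 i)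
  rwa [Fintype.card_fin, ← expect_columnExtensionAvg_pow_mul] at hfan

/-- The inner product expression dominates the subspace event: with F, G the
matrix-indicator functions of families 𝓛 ⊆ Grass(n, a+b) and 𝓡 ⊆ Grass(n, a)
(here a = 2(1−δ)ℓ and a + b = 2ℓ), and T the column-extension averaging operator,
Pr[R ∈ 𝓡 and L_1,…,L_k ∈ 𝓛] ≤ 2⟨(TF)^k, G⟩, provided 2(2ℓ + 2δkℓ)·2^{2ℓ} ≤ 2^n. -/
theorem stmt_14 (n a b k : ℕ)
    (𝓛 𝓡 : Submodule (ZMod 2) (Fin n → ZMod 2) → Prop)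
    (hcond : (2 * ((a + b : ℝ) + b * k)) * 2 ^ (a + b) ≤ 2 ^ n)
    (F : (Fin (a + b) → Fin n → ZMod 2) → ℝ)
    (hF : F = Set.indicator {M' | LinearIndependent (ZMod 2) M' ∧
      𝓛 (Submodule.span (ZMod 2) (Set.range M'))} (fun _ => (1 : ℝ)))
    (G : (Fin a → Fin n → ZMod 2) → ℝ)
    (hG : G = Set.indicator {M | LinearIndependent (ZMod 2) M ∧
      𝓡 (Submodule.span (ZMod 2) (Set.range M))} (fun _ => (1 : ℝ))) :
    (Nat.card {p : Submodule (ZMod 2) (Fin n → ZMod 2) ×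
          (Fin k → Submodule (ZMod 2) (Fin n → ZMod 2)) //
        (Module.finrank (ZMod 2) p.1 = a ∧
          ∀ i, Module.finrank (ZMod 2) (p.2 i) = a + b ∧ p.1 ≤ p.2 i) ∧
        (𝓡 p.1 ∧ ∀ i, 𝓛 (p.2 i))} : ℝ) /
      (Nat.card {p : Submodule (ZMod 2) (Fin n → ZMod 2) ×
          (Fin k → Submodule (ZMod 2) (Fin n → ZMod 2)) //
        Module.finrank (ZMod 2) p.1 = a ∧
          ∀ i, Module.finrank (ZMod 2) (p.2 i) = a + b ∧ p.1 ≤ p.2 i} : ℝ)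
      ≤ 2 * ((∑ M : Fin a → Fin n → ZMod 2,
          (((∑ v : Fin b → Fin n → ZMod 2, F (Fin.append M v)) / 2 ^ (n * b)) ^ k) * G M) /
            2 ^ (n * a)) := by
  subst hF hG
  have hcard : Nat.card (Fin n → ZMod 2) = 2 ^ n := by simp
  have h : 2 * (a + b * k) * Nat.card (ZMod 2) ^ (a + b) ≤ Nat.card (Fin n → ZMod 2) := by
    rw [hcard, Nat.card_zmod]
    refine le_trans ?_ (by exact_mod_cast hcond : 2 * (a + b + b * k) * 2 ^ (a + b) ≤ 2 ^ n)
    gcongr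
    omega
  simpa [IsFan, columnExtensionAvg, familyIndicator, Fintype.expect_eq_sum_div_card, pow_mul]
    using stmt_14_general a b k 𝓛 𝓡 h
end
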